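/- For every s > 1/2 there is a constant c_s > 0, depending only on s, such that for all d, m ∈ ℕ and every f ∈ F^{s,d}_mix, the Fourier partial sum over Λ = [-m, m]^d ∩ ℤ^d satisfies ‖f − P_Λ f‖_∞² ≤ d · c_s^d · m^{-(2s−1)}; consequently, N^∞(ε, F^{s,d}_mix) ≤ (d · c_s^d · ε^{-2})^{d/(2s−1)} for all ε > 0. -/

import Mathlib

open MeasureTheory Real Finset

noncomputable section

/-- The unit cube `[0,1]^d`. -/
def cube (d : ℕ) : Set (Fin d → ℝ) := Set.univ.pi fun _ => Set.Icc 0 1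

/-- The trigonometric character `e^{2πi⟨k,x⟩}`. -/
def eK (d : ℕ) (k : Fin d → ℤ) (x : Fin d → ℝ) : ℂ :=
  Complex.exp (2 * Real.pi * Complex.I * ∑ i, (k i : ℂ) * (x i : ℂ))

/-- The Fourier coefficient `f̂(k) = ∫_{[0,1]^d} f(x) e^{-2πi⟨k,x⟩} dx`. -/
def fCoeff (d : ℕ) (f : (Fin d → ℝ) → ℂ) (k : Fin d → ℤ) : ℂ :=
  ∫ x in cube d, f x * Complex.exp (-(2 * Real.pi * Complex.I) * ∑ i, (k i : ℂ) * (x i : ℂ))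

/-- `f` is 1-periodic in each coordinate. -/
def Periodic1 (d : ℕ) (f : (Fin d → ℝ) → ℂ) : Prop :=
  ∀ (x : Fin d → ℝ) (i : Fin d), f (Function.update x i (x i + 1)) = f x

/-- The weight `max(1, log ‖k‖_∞)`. -/
def logWeight (d : ℕ) (k : Fin d → ℤ) : ℝ :=
  max 1 (Real.log ((Finset.univ.sup fun i => (k i).natAbs : ℕ) : ℝ))

/-- The class `F_d^log` of continuous 1-periodic functions with
`∑_k |f̂(k)| max(1, log ‖k‖_∞) ≤ 1`. -/
def FdLog (d : ℕ) : Set ((Fin d → ℝ) → ℂ) :=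
  {f | Continuous f ∧ Periodic1 d f ∧
    Summable (fun k : Fin d → ℤ => ‖fCoeff d f k‖ * logWeight d k) ∧
    ∑' k : Fin d → ℤ, ‖fCoeff d f k‖ * logWeight d k ≤ 1}

/-- The mixed-smoothness weight `∏_{i=1}^d max(1, |k_i|^{2s})`. -/
def wMix (s : ℝ) (d : ℕ) (k : Fin d → ℤ) : ℝ :=
  ∏ i, max 1 (|(k i : ℝ)| ^ (2 * s))

/-- The unit ball `H^{s,d}_mix` of the Sobolev space of mixed smoothness `s`
(unweighted Korobov space). -/
def Hmix (s : ℝ) (d : ℕ) : Set ((Fin d → ℝ) → ℂ) :=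
  {f | Continuous f ∧ Periodic1 d f ∧
    Summable (fun k : Fin d → ℤ => ‖fCoeff d f k‖ ^ 2 * wMix s d k) ∧
    ∑' k : Fin d → ℤ, ‖fCoeff d f k‖ ^ 2 * wMix s d k ≤ 1}

/-- The class `F^{s,d}_mix` of functions in `H^{s,d}_mix` with absolutely summable
Fourier coefficients, `∑_k |f̂(k)| ≤ 1`. -/
def Fmix (s : ℝ) (d : ℕ) : Set ((Fin d → ℝ) → ℂ) :=
  {f | f ∈ Hmix s d ∧ Summable (fun k : Fin d → ℤ => ‖fCoeff d f k‖) ∧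
    ∑' k : Fin d → ℤ, ‖fCoeff d f k‖ ≤ 1}

/-- The cube of frequencies `[-m, m]^d ∩ ℤ^d`. -/
def boxZ (d m : ℕ) : Finset (Fin d → ℤ) :=
  Fintype.piFinset fun _ : Fin d => Finset.Icc (-(m : ℤ)) m

/-!
Expand `f` in its Fourier series. Since `∑ k, |f̂(k)|² wMix s d k ≤ 1`, Cauchy–Schwarz bounds the
squared truncation error at any point by the part of the lattice sum `∑ k, (wMix s d k)⁻¹` lying
outside the truncation set. That sum factorizes over the coordinates, and a frequency outside the
box `[-m, m]^d` has a coordinate outside `[-m, m]`, so it is at most `d` one-dimensional tails, each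
compared with `∫_m^∞ x^{-2s} dx`, times a `(d - 1)`-st power. For the cardinality put
`B = d K^d ε⁻²`, with `K` the constant `mixConst s`: if `B ≤ 1` the empty truncation set already
works, and otherwise `m = ⌈B^{1/(2s-1)}⌉` is both large enough for the error and at most
`2 B^{1/(2s-1)}`.
-/

section WeightedSums

variable {ι E : Type*} [SeminormedAddCommGroup E] {u : ι → E} {w : ι → ℝ}

lemma sq_sum_norm_le_tsum_mul_sum_inv (hw : ∀ i, 0 < w i)
    (hu : Summable fun i => ‖u i‖ ^ 2 * w i) (S : Finset ι) :
    (∑ i ∈ S, ‖u i‖) ^ 2 ≤ (∑' i, ‖u i‖ ^ 2 * w i) * ∑ i ∈ S, (w i)⁻¹ := by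
  have hnn (i : ι) : 0 ≤ ‖u i‖ ^ 2 * w i := mul_nonneg (sq_nonneg _) (hw i).le
  have hinv (i : ι) : 0 ≤ (w i)⁻¹ := (inv_pos.2 (hw i)).le
  calc (∑ i ∈ S, ‖u i‖) ^ 2
      ≤ (∑ i ∈ S, ‖u i‖ ^ 2 * w i) * ∑ i ∈ S, (w i)⁻¹ :=
        Finset.sum_sq_le_sum_mul_sum_of_sq_le_mul S (fun i _ => hnn i) (fun i _ => hinv i)
          fun i _ => (mul_inv_cancel_right₀ (hw i).ne' _).ge
    _ ≤ (∑' i, ‖u i‖ ^ 2 * w i) * ∑ i ∈ S, (w i)⁻¹ :=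
        mul_le_mul_of_nonneg_right (hu.sum_le_tsum S fun i _ => hnn i)
          (Finset.sum_nonneg fun i _ => hinv i)

lemma summable_norm_of_summable_sq_mul_of_summable_inv (hw : ∀ i, 0 < w i)
    (hu : Summable fun i => ‖u i‖ ^ 2 * w i) (hinv : Summable fun i => (w i)⁻¹) :
    Summable fun i => ‖u i‖ := by
  refine (hu.add hinv).of_nonneg_of_le (fun i => norm_nonneg _) fun i => ?_
  have hwi := hw i
  have h_key : ‖u i‖ * w i ≤ (‖u i‖ ^ 2 * w i + (w i)⁻¹) * w i := by
    rw [add_mul, inv_mul_cancel₀ hwi.ne']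
    nlinarith [sq_nonneg (‖u i‖ * w i - 1), sq_nonneg (‖u i‖ * w i)]
  exact le_of_mul_le_mul_right h_key hwi

lemma sq_norm_sub_sum_le_tsum_mul_tsum_inv (hw : ∀ i, 0 < w i)
    (hu : Summable fun i => ‖u i‖ ^ 2 * w i) (hinv : Summable fun i => (w i)⁻¹)
    {a : E} (ha : HasSum u a) (Λ : Finset ι) :
    ‖a - ∑ i ∈ Λ, u i‖ ^ 2 ≤ (∑' i, ‖u i‖ ^ 2 * w i) * ∑' i : {i // i ∉ Λ}, (w i)⁻¹ := by
  have h_tail : HasSum (fun i : {i // i ∉ Λ} => u i) (a - ∑ i ∈ Λ, u i) :=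
    Λ.hasSum_iff_compl.1 ha
  have h_energy : 0 ≤ ∑' i, ‖u i‖ ^ 2 * w i :=
    tsum_nonneg fun i => mul_nonneg (sq_nonneg _) (hw i).le
  refine le_of_tendsto (h_tail.norm.pow 2) (.of_forall fun S => ?_)
  have h_sum_le : ∑ i ∈ S, (w i)⁻¹ ≤ ∑' i : {i // i ∉ Λ}, (w i)⁻¹ :=
    (hinv.subtype (· ∉ Λ)).sum_le_tsum S fun i _ => (inv_pos.2 (hw i)).le
  calc ‖∑ i ∈ S, u i‖ ^ 2
      ≤ (∑ i ∈ S, ‖u i‖) ^ 2 := by gcongr; exact norm_sum_le _ _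
    _ ≤ (∑' i, ‖u i‖ ^ 2 * w i) * ∑ i ∈ S, (w i)⁻¹ := by
        simpa only [Finset.sum_map, Function.Embedding.subtype_apply] using
          sq_sum_norm_le_tsum_mul_sum_inv hw hu (S.map (.subtype _))
    _ ≤ (∑' i, ‖u i‖ ^ 2 * w i) * ∑' i : {i // i ∉ Λ}, (w i)⁻¹ := by gcongr

end WeightedSums

section CutoffFactors

variable {ι α : Type*} [DecidableEq ι] {g : α → ℝ}

/-- The family of factors `g, …, g` indexed by `ι`, with the `i`-th one set to zero on `A`. A
product of these factors is the part of `∏ j, g (k j)` carried by the points `k` with `k i ∉ A`. -/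
def cutoffFactors (g : α → ℝ) (A : Finset α) (i : ι) : ι → α → ℝ :=
  Function.update (fun _ => g) i ({a | a ∉ A}.indicator g)

lemma cutoffFactors_cases {p : (α → ℝ) → Prop} {A : Finset α} (hg : p g)
    (hA : p ({a | a ∉ A}.indicator g)) (i j : ι) : p (cutoffFactors g A i j) := by
  rcases eq_or_ne j i with rfl | hji
  · rwa [cutoffFactors, Function.update_self]
  · rwa [cutoffFactors, Function.update_of_ne hji]

lemma cutoffFactors_nonneg (hg : ∀ a, 0 ≤ g a) (A : Finset α) (i j : ι) (a : α) :
    0 ≤ cutoffFactors g A i j a :=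
  cutoffFactors_cases (p := fun h => ∀ a, 0 ≤ h a) hg
    (fun a => Set.indicator_nonneg (fun a _ => hg a) a) i j a

lemma summable_cutoffFactors (hg : Summable g) (A : Finset α) (i j : ι) :
    Summable (cutoffFactors g A i j) :=
  cutoffFactors_cases (p := Summable) hg (hg.indicator _) i j

end CutoffFactors

section ProductSums

variable {ι α : Type*} [Fintype ι]

lemma sum_prod_apply_le_prod_tsum {g : ι → α → ℝ} (hg_nonneg : ∀ i a, 0 ≤ g i a)
    (hg : ∀ i, Summable (g i)) (S : Finset (ι → α)) :
    ∑ k ∈ S, ∏ i, g i (k i) ≤ ∏ i, ∑' a, g i a := by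
  classical
  have h_sub : S ⊆ Fintype.piFinset fun i => S.image (· i) := fun k hk =>
    Fintype.mem_piFinset.2 fun i => Finset.mem_image_of_mem (· i) hk
  calc ∑ k ∈ S, ∏ i, g i (k i)
      ≤ ∑ k ∈ Fintype.piFinset fun i => S.image (· i), ∏ i, g i (k i) :=
        Finset.sum_le_sum_of_subset_of_nonneg h_sub fun k _ _ =>
          Finset.prod_nonneg fun i _ => hg_nonneg i _
    _ = ∏ i, ∑ a ∈ S.image (· i), g i a := (Finset.prod_univ_sum _ _).symm
    _ ≤ ∏ i, ∑' a, g i a :=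
        Finset.prod_le_prod (fun i _ => Finset.sum_nonneg fun a _ => hg_nonneg i a)
          fun i _ => (hg i).sum_le_tsum _ fun a _ => hg_nonneg i a

variable {g : α → ℝ}

lemma summable_prod_apply (hg_nonneg : ∀ a, 0 ≤ g a) (hg : Summable g) :
    Summable fun k : ι → α => ∏ i, g (k i) :=
  summable_of_sum_le (fun _ => Finset.prod_nonneg fun _ _ => hg_nonneg _)
    (sum_prod_apply_le_prod_tsum (fun _ => hg_nonneg) fun _ => hg)

lemma tsum_prod_apply_le (hg_nonneg : ∀ a, 0 ≤ g a) (hg : Summable g) :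
    ∑' k : ι → α, ∏ i, g (k i) ≤ (∑' a, g a) ^ Fintype.card ι := by
  refine Real.tsum_le_of_sum_le (fun _ => Finset.prod_nonneg fun _ _ => hg_nonneg _) fun S => ?_
  simpa using sum_prod_apply_le_prod_tsum (fun _ => hg_nonneg) (fun _ => hg) S

lemma prod_tsum_cutoffFactors [DecidableEq ι] (g : α → ℝ) (A : Finset α) (i : ι) :
    ∏ j, ∑' a, cutoffFactors g A i j a =
      (∑' a : {a // a ∉ A}, g a) * (∑' a, g a) ^ (Fintype.card ι - 1) := by
  have h_rest : ∏ j ∈ {i}ᶜ, ∑' a, cutoffFactors g A i j a = ∏ _j ∈ ({i}ᶜ : Finset ι), ∑' a, g a :=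
    Finset.prod_congr rfl fun j hj => by
      rw [cutoffFactors, Function.update_of_ne (by simpa using hj)]
  rw [Fintype.prod_eq_mul_prod_compl i, h_rest, Finset.prod_const, Finset.card_compl,
    Finset.card_singleton, cutoffFactors, Function.update_self, ← _root_.tsum_subtype]
  rfl

lemma prod_apply_le_sum_prod_cutoffFactors [DecidableEq ι] (hg : ∀ a, 0 ≤ g a)
    {A : Finset α} {k : ι → α} (hk : k ∉ Fintype.piFinset fun _ => A) :
    ∏ j, g (k j) ≤ ∑ i, ∏ j, cutoffFactors g A i j (k j) := by
  simp only [Fintype.mem_piFinset, not_forall] at hk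
  obtain ⟨i, hi⟩ := hk
  have h_eq (j : ι) : cutoffFactors g A i j (k j) = g (k j) := by
    rcases eq_or_ne j i with rfl | hji
    · rw [cutoffFactors, Function.update_self]
      exact Set.indicator_of_mem hi g
    · rw [cutoffFactors, Function.update_of_ne hji]
  calc ∏ j, g (k j)
      = ∏ j, cutoffFactors g A i j (k j) := Finset.prod_congr rfl fun j _ => (h_eq j).symm
    _ ≤ ∑ i, ∏ j, cutoffFactors g A i j (k j) :=
        Finset.single_le_sum (f := fun i => ∏ j, cutoffFactors g A i j (k j))
          (fun i _ => Finset.prod_nonneg fun j _ => cutoffFactors_nonneg hg A i j _)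
          (Finset.mem_univ i)

lemma tsum_prod_apply_compl_piFinset_le [DecidableEq ι] (hg_nonneg : ∀ a, 0 ≤ g a)
    (hg : Summable g) (A : Finset α) :
    ∑' k : {k : ι → α // k ∉ Fintype.piFinset fun _ => A}, ∏ i, g (k.1 i) ≤
      Fintype.card ι * ((∑' a : {a // a ∉ A}, g a) * (∑' a, g a) ^ (Fintype.card ι - 1)) := by
  refine Real.tsum_le_of_sum_le (fun _ => Finset.prod_nonneg fun _ _ => hg_nonneg _) fun S => ?_
  calc ∑ k ∈ S, ∏ j, g (k.1 j)
      ≤ ∑ k ∈ S, ∑ i, ∏ j, cutoffFactors g A i j (k.1 j) :=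
        Finset.sum_le_sum fun k _ => prod_apply_le_sum_prod_cutoffFactors hg_nonneg k.2
    _ = ∑ i, ∑ k ∈ S.map (.subtype _), ∏ j, cutoffFactors g A i j (k j) := by
        simp only [Finset.sum_map, Function.Embedding.subtype_apply]
        exact Finset.sum_comm
    _ ≤ ∑ i, ∏ j, ∑' a, cutoffFactors g A i j a :=
        Finset.sum_le_sum fun i _ =>
          sum_prod_apply_le_prod_tsum (cutoffFactors_nonneg hg_nonneg A i)
            (summable_cutoffFactors hg A i) _
    _ = _ := by
        simp only [prod_tsum_cutoffFactors, Finset.sum_const, Finset.card_univ, nsmul_eq_mul]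

end ProductSums

section OneDimensional

lemma tsum_nat_add_succ_rpow_neg_le {p : ℝ} (hp : 1 < p) {m : ℕ} (hm : 1 ≤ m) :
    ∑' n : ℕ, ((n + m + 1 : ℕ) : ℝ) ^ (-p) ≤ (m : ℝ) ^ (-(p - 1)) / (p - 1) := by
  have hm_pos : (0 : ℝ) < m := by exact_mod_cast hm
  have h_anti : AntitoneOn (fun x : ℝ => x ^ (-p)) (Set.Ici m) := fun x hx y _ hxy =>
    rpow_le_rpow_of_nonpos (hm_pos.trans_le hx) hxy (by linarith)
  have h_int := integrableOn_Ioi_rpow_of_lt (neg_lt_neg hp) hm_pos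
  calc ∑' n : ℕ, ((n + m + 1 : ℕ) : ℝ) ^ (-p)
      ≤ ∫ x in Set.Ioi (m : ℝ), x ^ (-p) :=
        h_anti.tsum_comp_add_le_integral m h_int fun x hx => rpow_nonneg (hm_pos.trans hx).le _
    _ = (m : ℝ) ^ (-(p - 1)) / (p - 1) := by
        rw [integral_Ioi_rpow_of_lt (neg_lt_neg hp) hm_pos, show -p + 1 = -(p - 1) by ring,
          neg_div_neg_eq]

lemma tsum_int_compl_Icc_of_even {G : Type*} [AddCommGroup G] [UniformSpace G] [IsUniformAddGroup G]
    [CompleteSpace G] [T2Space G] {f : ℤ → G} (hf_even : f.Even) (hf : Summable f) (m : ℕ) :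
    ∑' j : {j : ℤ // j ∉ Finset.Icc (-(m : ℤ)) m}, f j = 2 • ∑' n : ℕ, f (n + m + 1 : ℕ) := by
  set F : ℤ → G := {j : ℤ | j ∉ Finset.Icc (-(m : ℤ)) m}.indicator f with hF
  have hF_summable : Summable F := hf.indicator _
  have hF_even : F.Even := fun j => by
    simp only [hF, Set.indicator_apply, Set.mem_ofPred_eq, Finset.mem_Icc, hf_even j]
    congr 2
    exact propext (by omega)
  have hF_zero (n : ℕ) (hn : n ≤ m) : F n = 0 :=
    Set.indicator_of_notMem (by simp only [Set.mem_ofPred_eq, Finset.mem_Icc]; omega) f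
  have hF_eq (n : ℕ) (hn : m < n) : F n = f n :=
    Set.indicator_of_mem (by simp only [Set.mem_ofPred_eq, Finset.mem_Icc]; omega) f
  have hF_succ : Summable fun n : ℕ => F (n + 1 : ℕ) :=
    hF_summable.comp_injective (i := fun n : ℕ => ((n + 1 : ℕ) : ℤ)) fun a b h => by simpa using h
  calc ∑' j : {j : ℤ // j ∉ Finset.Icc (-(m : ℤ)) m}, f j
      = ∑' j, F j := tsum_subtype {j : ℤ | j ∉ Finset.Icc (-(m : ℤ)) m} f
    _ = 2 • ∑' n : ℕ, F (n + 1 : ℕ) := by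
        rw [tsum_int_eq_zero_add_two_mul_tsum_pnat hF_even hF_summable,
          show F 0 = 0 from hF_zero 0 m.zero_le, zero_add,
          tsum_pnat_eq_tsum_succ (f := fun n : ℕ => F n)]
    _ = 2 • ∑' n : ℕ, f (n + m + 1 : ℕ) := by
        rw [← hF_succ.sum_add_tsum_nat_add m, Finset.sum_eq_zero fun n hn =>
          hF_zero (n + 1) (Finset.mem_range.1 hn), zero_add]
        exact congrArg _ (tsum_congr fun n => hF_eq _ (by omega))

/-- The reciprocal `max(1, |j|^{2s})⁻¹` of the one-dimensional factor of the weight `wMix s d`. -/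
def invWeight (s : ℝ) (j : ℤ) : ℝ := (max 1 (|(j : ℝ)| ^ (2 * s)))⁻¹

lemma invWeight_nonneg (s : ℝ) (j : ℤ) : 0 ≤ invWeight s j :=
  inv_nonneg.2 (zero_le_one.trans (le_max_left _ _))

lemma invWeight_zero {s : ℝ} (hs : s ≠ 0) : invWeight s 0 = 1 := by
  simp [invWeight, hs]

lemma invWeight_even (s : ℝ) : (invWeight s).Even := fun j => by
  simp only [invWeight, Int.cast_neg, abs_neg]

lemma invWeight_of_ne_zero {s : ℝ} (hs : 0 ≤ s) {j : ℤ} (hj : j ≠ 0) :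
    invWeight s j = |(j : ℝ)| ^ (-(2 * s)) := by
  have hj_one : (1 : ℝ) ≤ |(j : ℝ)| := by exact_mod_cast Int.one_le_abs hj
  rw [invWeight, max_eq_right (one_le_rpow hj_one (by positivity)), rpow_neg (abs_nonneg _)]

lemma summable_invWeight {s : ℝ} (hs : 1 / 2 < s) : Summable (invWeight s) := by
  refine (Real.summable_abs_int_rpow (b := 2 * s) (by linarith)).congr_cofinite ?_
  filter_upwards [(Set.finite_singleton (0 : ℤ)).compl_mem_cofinite] with j hj
  exact (invWeight_of_ne_zero (by linarith) hj).symm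

lemma tsum_invWeight_compl_Icc_le {s : ℝ} (hs : 1 / 2 < s) {m : ℕ} (hm : 1 ≤ m) :
    ∑' j : {j : ℤ // j ∉ Finset.Icc (-(m : ℤ)) m}, invWeight s j ≤
      2 / (2 * s - 1) * (m : ℝ) ^ (-(2 * s - 1)) := by
  have h_eq (n : ℕ) : invWeight s (n + m + 1 : ℕ) = ((n + m + 1 : ℕ) : ℝ) ^ (-(2 * s)) := by
    rw [invWeight_of_ne_zero (by linarith) (by omega), Int.cast_natCast, Nat.abs_cast]
  rw [tsum_int_compl_Icc_of_even (invWeight_even s) (summable_invWeight hs), nsmul_eq_mul,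
    div_mul_eq_mul_div, mul_div_assoc]
  simp only [h_eq, Nat.cast_ofNat]
  exact mul_le_mul_of_nonneg_left (tsum_nat_add_succ_rpow_neg_le (by linarith) hm) zero_le_two

end OneDimensional

section FourierSeries

variable {d : ℕ} {f : (Fin d → ℝ) → ℂ}

lemma Periodic1.periodic_intCast (hf : Periodic1 d f) (n : Fin d → ℤ) :
    Function.Periodic f fun i => (n i : ℝ) := by
  have h_basis (i : Fin d) : Function.Periodic f (Pi.single i (1 : ℝ)) := fun x => by
    have h_update : x + Pi.single i 1 = Function.update x i (x i + 1) := by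
      ext j
      rcases eq_or_ne j i with rfl | hji <;> simp [*]
    rw [h_update, hf]
  have h_decomp : (fun i => (n i : ℝ)) = ∑ i, n i • Pi.single i (1 : ℝ) := by
    ext i
    simp [Finset.sum_apply, Pi.single_apply]
  rw [h_decomp]
  exact Finset.sum_induction _ (Function.Periodic f) (fun _ _ => .add_period)
    (Function.periodic_with_period_zero f) fun i _ => (h_basis i).zsmul (n i)

lemma Periodic1.exists_continuousMap_unitAddTorus (hf : Periodic1 d f) (hc : Continuous f) :
    ∃ F : C(UnitAddTorus (Fin d), ℂ),
      ∀ x : Fin d → ℝ, F (fun i => (x i : UnitAddCircle)) = f x := by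
  let q : C(Fin d → ℝ, UnitAddTorus (Fin d)) :=
    ⟨fun x i => (x i : UnitAddCircle), by fun_prop⟩
  have hq : Topology.IsQuotientMap q :=
    (IsOpenQuotientMap.piMap fun _ => QuotientAddGroup.isOpenQuotientMap_mk).isQuotientMap
  have h_factors : Function.FactorsThrough f q := fun x y hxy => by
    choose n hn using fun i =>
      (AddCircle.coe_eq_zero_iff (1 : ℝ)).1 (sub_eq_zero.2 (congrFun hxy i))
    have h_translate : x = y + fun i => (n i : ℝ) := by
      ext i
      exact sub_eq_iff_eq_add'.1 (by simpa only [zsmul_one] using (hn i).symm)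
    rw [h_translate, hf.periodic_intCast n y]
  exact ⟨hq.lift ⟨f, hc⟩ h_factors, fun x =>
    DFunLike.congr_fun (hq.lift_comp ⟨f, hc⟩ h_factors) x⟩

lemma mFourier_coe_eq_eK (k : Fin d → ℤ) (x : Fin d → ℝ) :
    UnitAddTorus.mFourier k (fun i => (x i : UnitAddCircle)) = eK d k x := by
  simp only [UnitAddTorus.mFourier, ContinuousMap.coe_mk, fourier_coe_apply, eK,
    ← Complex.exp_sum, Finset.mul_sum, Complex.ofReal_one, div_one, mul_assoc]

lemma mFourierCoeff_eq_fCoeff {F : C(UnitAddTorus (Fin d), ℂ)}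
    (hF : ∀ x : Fin d → ℝ, F (fun i => (x i : UnitAddCircle)) = f x) (k : Fin d → ℤ) :
    UnitAddTorus.mFourierCoeff F k = fCoeff d f k := by
  have h_cube : {x : Fin d → ℝ | ∀ i, x i ∈ Set.Ioc (0 : ℝ) (0 + 1)} =ᵐ[volume] cube d := by
    have h_ae := Measure.univ_pi_Ioc_ae_eq_Icc (μ := fun _ : Fin d => (volume : Measure ℝ))
      (f := fun _ => 0) (g := fun _ => 1)
    rw [← Set.pi_univ_Icc, ← volume_pi] at h_ae
    simpa only [zero_add, cube, Set.pi, Set.mem_univ, true_imp_iff] using h_ae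
  rw [UnitAddTorus.mFourierCoeff_eq_integral _ _ (fun _ => 0), fCoeff,
    setIntegral_congr_set h_cube]
  congr 1 with x
  rw [hF, mFourier_coe_eq_eK, smul_eq_mul, mul_comm, eK]
  simp

lemma hasSum_fCoeff_mul_eK (hf : Periodic1 d f) (hc : Continuous f)
    (h_summable : Summable fun k => ‖fCoeff d f k‖) (x : Fin d → ℝ) :
    HasSum (fun k => fCoeff d f k * eK d k x) (f x) := by
  obtain ⟨F, hF⟩ := hf.exists_continuousMap_unitAddTorus hc
  have h_coeff : UnitAddTorus.mFourierCoeff F = fCoeff d f := funext (mFourierCoeff_eq_fCoeff hF)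
  have h_series := UnitAddTorus.hasSum_mFourier_series_apply_of_summable
    (h_coeff ▸ h_summable.of_norm) fun i => (x i : UnitAddCircle)
  simpa only [h_coeff, hF, mFourier_coe_eq_eK, smul_eq_mul] using h_series

lemma norm_eK (k : Fin d → ℤ) (x : Fin d → ℝ) : ‖eK d k x‖ = 1 := by
  have h_real : 2 * (π : ℂ) * Complex.I * ∑ i, (k i : ℂ) * (x i : ℂ) =
      (2 * π * ∑ i, (k i : ℝ) * x i : ℝ) * Complex.I := by
    push_cast
    ring
  rw [eK, h_real, Complex.norm_exp_ofReal_mul_I]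

end FourierSeries

section MixedSmoothness

lemma wMix_pos (s : ℝ) (d : ℕ) (k : Fin d → ℤ) : 0 < wMix s d k :=
  Finset.prod_pos fun _ _ => zero_lt_one.trans_le (le_max_left _ _)

lemma inv_wMix (s : ℝ) (d : ℕ) (k : Fin d → ℤ) : (wMix s d k)⁻¹ = ∏ i, invWeight s (k i) :=
  (Finset.prod_inv_distrib _).symm

lemma card_boxZ (d m : ℕ) : (boxZ d m).card = (2 * m + 1) ^ d := by
  rw [boxZ, Fintype.card_piFinset_const, Int.card_Icc]
  congr 1
  omega

/-- The constant governing the tails of the lattice sum `∑ k, (wMix s d k)⁻¹`: the sum of the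
one-dimensional reciprocal weights plus the constant of `tsum_invWeight_compl_Icc_le`. -/
def mixConst (s : ℝ) : ℝ := ∑' j, invWeight s j + 2 / (2 * s - 1)

variable {s : ℝ}

lemma tsum_invWeight_le_mixConst (hs : 1 / 2 < s) : ∑' j, invWeight s j ≤ mixConst s :=
  le_add_of_nonneg_right (div_nonneg zero_le_two (by linarith))

lemma mixConst_pos (hs : 1 / 2 < s) : 0 < mixConst s := by
  have h_term := (summable_invWeight hs).le_tsum 0 fun j _ => invWeight_nonneg s j
  rw [invWeight_zero (by linarith)] at h_term
  exact zero_lt_one.trans_le (h_term.trans (tsum_invWeight_le_mixConst hs))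

lemma summable_inv_wMix (hs : 1 / 2 < s) (d : ℕ) :
    Summable fun k : Fin d → ℤ => (wMix s d k)⁻¹ := by
  simpa only [inv_wMix] using summable_prod_apply (invWeight_nonneg s) (summable_invWeight hs)

lemma tsum_inv_wMix_le (hs : 1 / 2 < s) (d : ℕ) :
    ∑' k : Fin d → ℤ, (wMix s d k)⁻¹ ≤ mixConst s ^ d := by
  simp only [inv_wMix]
  calc ∑' k : Fin d → ℤ, ∏ i, invWeight s (k i)
      ≤ (∑' j, invWeight s j) ^ d := by
        simpa only [Fintype.card_fin] using
          tsum_prod_apply_le (ι := Fin d) (invWeight_nonneg s) (summable_invWeight hs)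
    _ ≤ mixConst s ^ d :=
        pow_le_pow_left₀ (tsum_nonneg (invWeight_nonneg s)) (tsum_invWeight_le_mixConst hs) d

lemma tsum_inv_wMix_compl_boxZ_le (hs : 1 / 2 < s) (d : ℕ) {m : ℕ} (hm : 1 ≤ m) :
    ∑' k : {k // k ∉ boxZ d m}, (wMix s d k)⁻¹ ≤
      d * mixConst s ^ d * (m : ℝ) ^ (-(2 * s - 1)) := by
  have h_tail : ∑' j : {j : ℤ // j ∉ Finset.Icc (-(m : ℤ)) m}, invWeight s j ≤
      mixConst s * (m : ℝ) ^ (-(2 * s - 1)) :=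
    (tsum_invWeight_compl_Icc_le hs hm).trans <| mul_le_mul_of_nonneg_right
      (le_add_of_nonneg_left (tsum_nonneg (invWeight_nonneg s))) (by positivity)
  have h_product := tsum_prod_apply_compl_piFinset_le (ι := Fin d) (invWeight_nonneg s)
    (summable_invWeight hs) (Finset.Icc (-(m : ℤ)) m)
  simp only [inv_wMix]
  rw [Fintype.card_fin] at h_product
  refine h_product.trans ?_
  rcases d with _ | n
  · simp
  calc ((n + 1 : ℕ) : ℝ) * ((∑' j : {j : ℤ // j ∉ Finset.Icc (-(m : ℤ)) m}, invWeight s j) *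
        (∑' j, invWeight s j) ^ n)
      ≤ (n + 1 : ℕ) * (mixConst s * (m : ℝ) ^ (-(2 * s - 1)) * mixConst s ^ n) := by
        have h_pos := mixConst_pos hs
        gcongr
        · exact pow_nonneg (tsum_nonneg (invWeight_nonneg s)) n
        · exact tsum_nonneg (invWeight_nonneg s)
        · exact tsum_invWeight_le_mixConst hs
    _ = (n + 1 : ℕ) * mixConst s ^ (n + 1) * (m : ℝ) ^ (-(2 * s - 1)) := by ring

variable {d : ℕ} {f : (Fin d → ℝ) → ℂ}

lemma Hmix.sq_norm_sub_sum_le (hs : 1 / 2 < s) (hf : f ∈ Hmix s d) (Λ : Finset (Fin d → ℤ))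
    (x : Fin d → ℝ) :
    ‖f x - ∑ k ∈ Λ, fCoeff d f k * eK d k x‖ ^ 2 ≤ ∑' k : {k // k ∉ Λ}, (wMix s d k)⁻¹ := by
  obtain ⟨hc, hp, h_energy, h_energy_le⟩ := hf
  have h_inv := summable_inv_wMix hs d
  have h_norm (k : Fin d → ℤ) : ‖fCoeff d f k * eK d k x‖ = ‖fCoeff d f k‖ := by
    rw [norm_mul, norm_eK, mul_one]
  have h_series := hasSum_fCoeff_mul_eK hp hc
    (summable_norm_of_summable_sq_mul_of_summable_inv (wMix_pos s d) h_energy h_inv) x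
  have h_error := sq_norm_sub_sum_le_tsum_mul_tsum_inv (wMix_pos s d)
    (by simpa only [h_norm] using h_energy) h_inv h_series Λ
  simp only [h_norm] at h_error
  exact h_error.trans <| mul_le_of_le_one_left
    (tsum_nonneg fun k => (inv_pos.2 (wMix_pos s d k)).le) h_energy_le

lemma Hmix.sq_norm_sub_sum_boxZ_le (hs : 1 / 2 < s) (hf : f ∈ Hmix s d) {m : ℕ} (hm : 1 ≤ m)
    (x : Fin d → ℝ) :
    ‖f x - ∑ k ∈ boxZ d m, fCoeff d f k * eK d k x‖ ^ 2 ≤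
      d * mixConst s ^ d * (m : ℝ) ^ (-(2 * s - 1)) :=
  (Hmix.sq_norm_sub_sum_le hs hf _ x).trans (tsum_inv_wMix_compl_boxZ_le hs d hm)

lemma Hmix.sq_norm_le (hs : 1 / 2 < s) (hf : f ∈ Hmix s d) (x : Fin d → ℝ) :
    ‖f x‖ ^ 2 ≤ mixConst s ^ d := by
  have h_all : ∑' k : {k // k ∉ (∅ : Finset (Fin d → ℤ))}, (wMix s d k)⁻¹ =
      ∑' k, (wMix s d k)⁻¹ := by
    simpa using (summable_inv_wMix hs d).sum_add_tsum_subtype_compl ∅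
  have h_error := Hmix.sq_norm_sub_sum_le hs hf ∅ x
  rw [Finset.sum_empty, sub_zero, h_all] at h_error
  exact h_error.trans (tsum_inv_wMix_le hs d)

end MixedSmoothness

section Cardinality

lemma exists_nat_mul_rpow_neg_le_one {a B : ℝ} (ha : 0 < a) (hB : 1 ≤ B) :
    ∃ m : ℕ, 1 ≤ m ∧ B * (m : ℝ) ^ (-a) ≤ 1 ∧ (2 * m + 1 : ℝ) ^ a ≤ 5 ^ a * B := by
  have hB_pos : 0 < B := zero_lt_one.trans_le hB
  set t : ℝ := B ^ a⁻¹
  have ht_pow : t ^ a = B := rpow_inv_rpow hB_pos.le ha.ne'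
  have ht_one : 1 ≤ t := one_le_rpow hB (inv_nonneg.2 ha.le)
  have h_ceil : t ≤ ⌈t⌉₊ := Nat.le_ceil t
  have h_ceil_lt : (⌈t⌉₊ : ℝ) < t + 1 := Nat.ceil_lt_add_one (by linarith)
  refine ⟨⌈t⌉₊, by exact_mod_cast ht_one.trans h_ceil, ?_, ?_⟩
  · rw [rpow_neg (Nat.cast_nonneg _), ← div_eq_mul_inv]
    refine div_le_one_of_le₀ ?_ (by positivity)
    calc B = t ^ a := ht_pow.symm
      _ ≤ (⌈t⌉₊ : ℝ) ^ a := by gcongr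
  · calc (2 * ⌈t⌉₊ + 1 : ℝ) ^ a ≤ (5 * t) ^ a := by gcongr; linarith
      _ = 5 ^ a * B := by rw [mul_rpow (by norm_num) (by positivity), ht_pow]

lemma pow_le_rpow_div {a x y : ℝ} (ha : 0 < a) (hx : 0 ≤ x) (hxy : x ^ a ≤ y) (d : ℕ) :
    x ^ d ≤ y ^ ((d : ℝ) / a) := by
  calc x ^ d = (x ^ a) ^ ((d : ℝ) / a) := by
        rw [← rpow_mul hx, mul_div_cancel₀ _ ha.ne', rpow_natCast]
    _ ≤ y ^ ((d : ℝ) / a) := by gcongr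

lemma Hmix.exists_card_le_forall_norm_sub_sum_le {s : ℝ} (hs : 1 / 2 < s) {d : ℕ} (hd : 1 ≤ d)
    {ε : ℝ} (hε : 0 < ε) :
    ∃ Λ : Finset (Fin d → ℤ),
      (Λ.card : ℝ) ≤
        (5 ^ (2 * s - 1) * (d * mixConst s ^ d * ε ^ (-2 : ℝ))) ^ ((d : ℝ) / (2 * s - 1)) ∧
      ∀ f ∈ Hmix s d, ∀ x, ‖f x - ∑ k ∈ Λ, fCoeff d f k * eK d k x‖ ≤ ε := by
  have ha : 0 < 2 * s - 1 := by linarith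
  have hK := mixConst_pos hs
  set B : ℝ := d * mixConst s ^ d * ε ^ (-2 : ℝ) with hB
  have hB_nonneg : 0 ≤ B := by rw [hB]; positivity
  have hB_sq : d * mixConst s ^ d = B * ε ^ 2 := by
    rw [hB, rpow_neg hε.le, rpow_two, inv_mul_cancel_right₀ (pow_ne_zero 2 hε.ne')]
  rcases le_total B 1 with hB_one | hB_one
  · refine ⟨∅, ?_, fun f hf x => ?_⟩
    · rw [Finset.card_empty, Nat.cast_zero]
      exact rpow_nonneg (mul_nonneg (by positivity) hB_nonneg) _
    · rw [Finset.sum_empty, sub_zero]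
      refine le_of_sq_le_sq ?_ hε.le
      calc ‖f x‖ ^ 2 ≤ mixConst s ^ d := Hmix.sq_norm_le hs hf x
        _ ≤ d * mixConst s ^ d := le_mul_of_one_le_left (by positivity) (by exact_mod_cast hd)
        _ = B * ε ^ 2 := hB_sq
        _ ≤ ε ^ 2 := mul_le_of_le_one_left (by positivity) hB_one
  · obtain ⟨m, hm, h_error, h_card⟩ := exists_nat_mul_rpow_neg_le_one ha hB_one
    refine ⟨boxZ d m, ?_, fun f hf x => le_of_sq_le_sq ?_ hε.le⟩
    · rw [card_boxZ]
      exact_mod_cast pow_le_rpow_div ha (by positivity) h_card d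
    · calc ‖f x - ∑ k ∈ boxZ d m, fCoeff d f k * eK d k x‖ ^ 2
          ≤ d * mixConst s ^ d * (m : ℝ) ^ (-(2 * s - 1)) := Hmix.sq_norm_sub_sum_boxZ_le hs hf hm x
        _ = B * (m : ℝ) ^ (-(2 * s - 1)) * ε ^ 2 := by rw [hB_sq]; ring
        _ ≤ ε ^ 2 := mul_le_of_le_one_left (by positivity) h_error

end Cardinality

theorem statement7_general :
    ∀ s : ℝ, 1/2 < s →
      ∃ c : ℝ, 0 < c ∧
        (∀ (d m : ℕ), 1 ≤ m → ∀ f ∈ Hmix s d, ∀ x : Fin d → ℝ,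
          ‖f x - ∑ k ∈ boxZ d m, fCoeff d f k * eK d k x‖ ^ 2
            ≤ d * c ^ d * (m : ℝ) ^ (-(2 * s - 1))) ∧
        (∀ (d : ℕ) (ε : ℝ), 1 ≤ d → 0 < ε →
          ∃ Λ : Finset (Fin d → ℤ),
            (Λ.card : ℝ) ≤ ((d : ℝ) * c ^ d * ε ^ (-2 : ℝ)) ^ ((d : ℝ) / (2 * s - 1)) ∧
            ∀ f ∈ Hmix s d, ∀ x : Fin d → ℝ,
              ‖f x - ∑ k ∈ Λ, fCoeff d f k * eK d k x‖ ≤ ε) := by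
  intro s hs
  have hK := mixConst_pos hs
  have ha : 0 < 2 * s - 1 := by linarith
  have h_five : (1 : ℝ) ≤ 5 ^ (2 * s - 1) := one_le_rpow (by norm_num) ha.le
  refine ⟨5 ^ (2 * s - 1) * mixConst s, by positivity, fun d m hm f hf x => ?_,
    fun d ε hd hε => ?_⟩
  · refine (Hmix.sq_norm_sub_sum_boxZ_le hs hf hm x).trans ?_
    gcongr
    exact le_mul_of_one_le_left hK.le h_five
  · obtain ⟨Λ, h_card, h_error⟩ := Hmix.exists_card_le_forall_norm_sub_sum_le hs hd hε
    refine ⟨Λ, h_card.trans (rpow_le_rpow (by positivity) ?_ (by positivity)), h_error⟩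
    calc (5 : ℝ) ^ (2 * s - 1) * (d * mixConst s ^ d * ε ^ (-2 : ℝ))
        ≤ (5 ^ (2 * s - 1)) ^ d * (d * mixConst s ^ d * ε ^ (-2 : ℝ)) := by
          gcongr
          exact le_self_pow₀ h_five (by omega)
      _ = d * (5 ^ (2 * s - 1) * mixConst s) ^ d * ε ^ (-2 : ℝ) := by ring

/-- for `s > 1/2` there is `c_s > 0` (depending only on `s`) such that for all
`d, m ≥ 1` and `f ∈ F^{s,d}_mix`, `‖f − P_{[-m,m]^d} f‖_∞² ≤ d c_s^d m^{-(2s-1)}`;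
consequently `N^∞(ε, F^{s,d}_mix) ≤ (d c_s^d ε^{-2})^{d/(2s-1)}` for all `ε > 0`. -/
theorem statement7 :
    ∀ s : ℝ, 1/2 < s →
      ∃ c : ℝ, 0 < c ∧
        (∀ (d m : ℕ), 1 ≤ d → 1 ≤ m → ∀ f ∈ Fmix s d, ∀ x : Fin d → ℝ,
          ‖f x - ∑ k ∈ boxZ d m, fCoeff d f k * eK d k x‖ ^ 2
            ≤ d * c ^ d * (m : ℝ) ^ (-(2 * s - 1))) ∧
        (∀ (d : ℕ) (ε : ℝ), 1 ≤ d → 0 < ε →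
          ∃ Λ : Finset (Fin d → ℤ),
            (Λ.card : ℝ) ≤ ((d : ℝ) * c ^ d * ε ^ (-2 : ℝ)) ^ ((d : ℝ) / (2 * s - 1)) ∧
            ∀ f ∈ Fmix s d, ∀ x : Fin d → ℝ,
              ‖f x - ∑ k ∈ Λ, fCoeff d f k * eK d k x‖ ≤ ε) := by
  intro s hs
  obtain ⟨c, hc, h_error, h_card⟩ := statement7_general s hs
  exact ⟨c, hc, fun d m _ hm f hf => h_error d m hm f hf.1, fun d ε hd hε =>
    (h_card d ε hd hε).imp fun _ h => ⟨h.1, fun f hf => h.2 f hf.1⟩⟩
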